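/- arXiv:1004.2574 — 2 statements merged into one kernel-verified Lean document; each statement's English description precedes it below -/
import Mathlib

section
/- Fix a natural number k ≥ 1 and c : Fin k → ℝ. Let Γ ⊆ ℂ be the image of a topological embedding of Circle into ℂ with 0 ∉ Γ (a smooth loop in ℂ not passing through the origin). Then the set S_{Γ,c} = { z ∈ ℂ^{k+1} : Π_m z m ∈ Γ and ‖z i‖² − ‖z (i+1)‖² = c i for every i ∈ Fin k }, with the subspace topology, is homeomorphic to the (k+1)-dimensional torus Fin (k+1) → Circle. (This is the topological part of Proposition 1.1: fixing a couple (c_1,…,c_k) of non-critical values and a loop γ ⊂ ℂ_a avoiding the origin defines a torus S_{γ,(c_1,…,c_k)} = ⋃_{a∈γ} S^a_{(c_1,…,c_k)} in ℂ^{k+1}.) -/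
noncomputable section

/-- The torus `S_{Γ,c} = ⋃_{a ∈ Γ} S^a_c` over a loop `Γ` in the base. -/
def loopTorus (k : ℕ) (Γ : Set ℂ) (c : Fin k → ℝ) : Set (Fin (k + 1) → ℂ) :=
  { z | (∏ m, z m) ∈ Γ ∧ ∀ i : Fin k, ‖z i.castSucc‖ ^ 2 - ‖z i.succ‖ ^ 2 = c i }

/-!
Polar coordinates `z i = ρ i * u i` separate the two kinds of conditions. The level conditions say
that `ρ i ^ 2 = t - s i` for a common `t`, where `s` are the partial sums of `c`; since
`t ↦ ∏ i, (t - s i)` increases continuously from `0` to `∞` once `t` passes every `s i`, the moduli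
are continuous functions of `∏ i, ρ i`, the modulus of the base point `a ∈ Γ`. What remains are
phases `u` with `∏ i, u i = a / ‖a‖`, and all of them but one can be chosen freely. Hence the
set is homeomorphic to `Γ` times a `k`-torus.
-/

section Moduli

open Set

variable {ι : Type*} [Fintype ι] [Nonempty ι] (s : ι → ℝ)

theorem strictMonoOn_prod_sub :
    StrictMonoOn (fun t : ℝ => ∏ i, (t - s i)) {t | ∀ i, s i < t} :=
  fun _ ht _ _ htt' => Finset.prod_lt_prod_of_nonempty (fun i _ => sub_pos.2 (ht i))
    (fun i _ => sub_lt_sub_right htt' (s i)) Finset.univ_nonempty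

theorem exists_prod_sub_eq {v : ℝ} (hv : 0 < v) :
    ∃ t : ℝ, (∀ i, s i < t) ∧ ∏ i, (t - s i) = v := by
  obtain ⟨j, hj⟩ := Finite.exists_max s
  have hzero : ∏ i, (s j - s i) = 0 :=
    Finset.prod_eq_zero (Finset.mem_univ j) (sub_self _)
  have hlarge : v ≤ ∏ i, (s j + (1 + v) - s i) := by
    calc v ≤ 1 + v := by linarith
      _ ≤ (1 + v) ^ Fintype.card ι := le_self_pow₀ (by linarith) Fintype.card_ne_zero
      _ = ∏ _i : ι, (1 + v) := by rw [Finset.prod_const, Finset.card_univ]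
      _ ≤ ∏ i, (s j + (1 + v) - s i) :=
        Finset.prod_le_prod (fun _ _ => by linarith) fun i _ => by linarith [hj i]
  have hcont : Continuous fun t : ℝ => ∏ i, (t - s i) := by fun_prop
  obtain ⟨t, ht, rfl⟩ := intermediate_value_Icc (by linarith : s j ≤ s j + (1 + v))
    hcont.continuousOn ⟨hzero.trans_le hv.le, hlarge⟩
  refine ⟨t, fun i => ((hj i).trans ht.1).lt_of_ne fun h => hv.ne' ?_, rfl⟩
  exact Finset.prod_eq_zero (Finset.mem_univ i) (sub_eq_zero.2 h.symm)

theorem image_prod_sub : (fun t : ℝ => ∏ i, (t - s i)) '' {t | ∀ i, s i < t} = Ioi 0 := by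
  refine Subset.antisymm ?_ fun v hv => exists_prod_sub_eq s hv
  rintro _ ⟨t, ht, rfl⟩
  exact Finset.prod_pos fun i _ => sub_pos.2 (ht i)

/-- The polynomial function `t ↦ ∏ i, (t - s i)`, as an order isomorphism from the points to the
right of all its roots onto the positive reals. -/
def prodSubOrderIso : {t : ℝ | ∀ i, s i < t} ≃o Ioi (0 : ℝ) :=
  ((strictMonoOn_prod_sub s).orderIso _ _).trans (OrderIso.setCongr _ _ (image_prod_sub s))

theorem prodSubOrderIso_apply (t : {t : ℝ | ∀ i, s i < t}) :
    (prodSubOrderIso s t : ℝ) = ∏ i, (t - s i) := rfl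

theorem continuous_prodSubOrderIso_symm : Continuous (prodSubOrderIso s).symm := by
  have : OrdConnected {t : ℝ | ∀ i, s i < t} :=
    ⟨fun _ ht _ _ _ hx i => (ht i).trans_le hx.1⟩
  exact (prodSubOrderIso s).symm.continuous

/-- The common value of `ρ i ^ 2 + s i` for the positive vector `ρ` with product `r` for which these
values agree. -/
def commonLevel (r : Ioi (0 : ℝ)) : {t : ℝ | ∀ i, s i < t} :=
  (prodSubOrderIso s).symm ⟨(r : ℝ) ^ 2, mem_Ioi.2 (pow_pos r.2 2)⟩

/-- The positive vector `ρ` with product `r` for which `ρ i ^ 2 + s i` does not depend on `i`. -/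
def levelRadius (r : Ioi (0 : ℝ)) (i : ι) : ℝ :=
  √(commonLevel s r - s i)

theorem levelRadius_pos (r : Ioi (0 : ℝ)) (i : ι) : 0 < levelRadius s r i :=
  Real.sqrt_pos.2 (sub_pos.2 ((commonLevel s r).2 i))

theorem sq_levelRadius (r : Ioi (0 : ℝ)) (i : ι) : levelRadius s r i ^ 2 = commonLevel s r - s i :=
  Real.sq_sqrt (sub_pos.2 ((commonLevel s r).2 i)).le

theorem prod_commonLevel_sub (r : Ioi (0 : ℝ)) : ∏ i, (commonLevel s r - s i) = (r : ℝ) ^ 2 := by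
  rw [← prodSubOrderIso_apply, commonLevel, OrderIso.apply_symm_apply]

theorem prod_levelRadius (r : Ioi (0 : ℝ)) : ∏ i, levelRadius s r i = r := by
  refine (pow_left_inj₀ (Finset.prod_nonneg fun i _ => (levelRadius_pos s r i).le) r.2.le
    two_ne_zero).1 ?_
  simp only [← Finset.prod_pow, sq_levelRadius, prod_commonLevel_sub]

theorem continuous_levelRadius : Continuous (levelRadius s) := by
  have : Continuous (commonLevel s) :=
    (continuous_prodSubOrderIso_symm s).comp <|
      Continuous.subtype_mk (f := fun r : Ioi (0 : ℝ) => (r : ℝ) ^ 2) (by fun_prop) _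
  unfold levelRadius
  fun_prop

variable {s}

theorem levelRadius_prod_eq {ρ : ι → ℝ} (hρ : ∀ i, 0 < ρ i) {t : ℝ}
    (ht : ∀ i, ρ i ^ 2 = t - s i) :
    levelRadius s ⟨∏ i, ρ i, Finset.prod_pos fun i _ => hρ i⟩ = ρ := by
  have hst (i : ι) : s i < t := sub_pos.1 (ht i ▸ pow_pos (hρ i) 2)
  have hcommon : commonLevel s ⟨∏ i, ρ i, Finset.prod_pos fun i _ => hρ i⟩ = ⟨t, hst⟩ := by
    refine (prodSubOrderIso s).symm_apply_eq.2 (Subtype.ext ?_)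
    simp only [prodSubOrderIso_apply, ← ht, Finset.prod_pow]
  funext i
  rw [levelRadius, hcommon, ← ht, Real.sqrt_sq (hρ i).le]

end Moduli

section Phase

/-- The phase `z / ‖z‖` of a complex number, with the junk value `1` at `z = 0`. -/
def phase (z : ℂ) : Circle := Circle.exp z.arg

theorem norm_mul_phase (z : ℂ) : (‖z‖ : ℂ) * phase z = z := by
  rw [phase, Circle.coe_exp, Complex.norm_mul_exp_arg_mul_I]

theorem phase_ofReal_mul_coe {r : ℝ} (hr : 0 < r) (u : Circle) : phase (r * u) = u := by
  rw [phase, Complex.arg_real_mul _ hr, Circle.exp_arg]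

theorem continuousOn_phase : ContinuousOn phase {0}ᶜ := by
  have hdiv : ContinuousOn (fun z : ℂ => z / ‖z‖) {0}ᶜ := by
    fun_prop (disch := simp_all)
  refine Topology.IsInducing.subtypeVal.continuousOn_iff.2 (hdiv.congr fun z hz => ?_)
  exact eq_div_of_mul_eq (by simpa using hz) ((mul_comm _ _).trans (norm_mul_phase z))

theorem prod_ofReal_mul_coe {ι : Type*} [Fintype ι] (ρ : ι → ℝ) (u : ι → Circle) :
    ∏ i, (ρ i * u i : ℂ) = (∏ i, ρ i : ℝ) * (∏ i, u i : Circle) := by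
  rw [Finset.prod_mul_distrib, Complex.ofReal_prod]
  exact congrArg _ (map_prod Circle.coeHom u Finset.univ).symm

theorem prod_phase {ι : Type*} [Fintype ι] {z : ι → ℂ} (hz : ∀ i, z i ≠ 0) :
    ∏ i, phase (z i) = phase (∏ i, z i) := by
  have hpolar : ((∏ i, ‖z i‖ : ℝ) * (∏ i, phase (z i) : Circle) : ℂ) = ∏ i, z i := by
    simp only [← prod_ofReal_mul_coe, norm_mul_phase]
  rw [← hpolar, phase_ofReal_mul_coe (Finset.prod_pos fun i _ => norm_pos_iff.2 (hz i))]

end Phase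

section LevelSet

variable {ι : Type*} [Fintype ι]

/-- The points of `ℂ^ι` with product of coordinates in `Γ` for which `‖z i‖ ^ 2 + s i` does not
depend on `i`: a form of `loopTorus` that does not use an order of the coordinates. -/
def normSqLevelSet (Γ : Set ℂ) (s : ι → ℝ) : Set (ι → ℂ) :=
  {z | ∏ i, z i ∈ Γ ∧ ∃ t, ∀ i, ‖z i‖ ^ 2 = t - s i}

theorem loopTorus_eq_normSqLevelSet (k : ℕ) (Γ : Set ℂ) (c : Fin k → ℝ) :
    loopTorus k Γ c = normSqLevelSet Γ (Fin.partialSum c) := by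
  ext z
  refine and_congr_right fun _ => ⟨fun h => ⟨‖z 0‖ ^ 2, fun i => ?_⟩, fun ⟨t, ht⟩ i => ?_⟩
  · induction i using Fin.induction with
    | zero => rw [Fin.partialSum_zero, sub_zero]
    | succ i ih => linarith [h i, Fin.partialSum_succ c i]
  · linarith [ht i.castSucc, ht i.succ, Fin.partialSum_succ c i]

variable {Γ : Set ℂ} {s : ι → ℝ}

theorem ne_zero_of_mem_normSqLevelSet (hΓ : 0 ∉ Γ) {z : ι → ℂ} (hz : z ∈ normSqLevelSet Γ s)
    (i : ι) : z i ≠ 0 :=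
  Finset.prod_ne_zero_iff.1 (ne_of_mem_of_not_mem hz.1 hΓ) i (Finset.mem_univ i)

variable [Nonempty ι]

theorem levelRadius_norm_prod_eq (hΓ : 0 ∉ Γ) {z : ι → ℂ} (hz : z ∈ normSqLevelSet Γ s) :
    levelRadius s ⟨‖∏ i, z i‖, norm_pos_iff.2 (ne_of_mem_of_not_mem hz.1 hΓ)⟩ =
      fun i => ‖z i‖ := by
  obtain ⟨t, ht⟩ := hz.2
  simp only [norm_prod]
  exact levelRadius_prod_eq (fun i => norm_pos_iff.2 (ne_zero_of_mem_normSqLevelSet hΓ hz i)) ht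

theorem prod_levelRadius_mul_coe {a : ℂ} (ha : a ≠ 0) {u : ι → Circle}
    (hu : ∏ i, u i = phase a) :
    ∏ i, (levelRadius s ⟨‖a‖, norm_pos_iff.2 ha⟩ i * u i : ℂ) = a := by
  rw [prod_ofReal_mul_coe, prod_levelRadius, hu, norm_mul_phase]

theorem levelRadius_mul_mem_normSqLevelSet {a : ℂ} (haΓ : a ∈ Γ) (ha : a ≠ 0) {u : ι → Circle}
    (hu : ∏ i, u i = phase a) :
    (fun i => (levelRadius s ⟨‖a‖, norm_pos_iff.2 ha⟩ i * u i : ℂ)) ∈ normSqLevelSet Γ s := by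
  refine ⟨(prod_levelRadius_mul_coe ha hu).symm ▸ haΓ,
    commonLevel s ⟨‖a‖, norm_pos_iff.2 ha⟩, fun i => ?_⟩
  rw [norm_mul, Circle.norm_coe, mul_one, Complex.norm_of_nonneg (levelRadius_pos s _ i).le,
    sq_levelRadius]

variable (s) in
/-- Polar coordinates on `normSqLevelSet Γ s`: a point is determined by the product of its
coordinates and by their phases. -/
def normSqLevelSetPolarHomeomorph (hΓ : 0 ∉ Γ) :
    normSqLevelSet Γ s ≃ₜ {p : Γ × (ι → Circle) | ∏ i, p.2 i = phase p.1} where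
  toFun z := ⟨(⟨∏ i, z.1 i, z.2.1⟩, fun i => phase (z.1 i)),
    prod_phase (ne_zero_of_mem_normSqLevelSet hΓ z.2)⟩
  invFun p := ⟨_, levelRadius_mul_mem_normSqLevelSet p.1.1.2
    (ne_of_mem_of_not_mem p.1.1.2 hΓ) p.2⟩
  left_inv z := by
    ext i
    simp only [levelRadius_norm_prod_eq hΓ z.2, norm_mul_phase]
  right_inv p := by
    have ha : (p.1.1 : ℂ) ≠ 0 := ne_of_mem_of_not_mem p.1.1.2 hΓ
    refine Subtype.ext (Prod.ext (Subtype.ext (prod_levelRadius_mul_coe ha p.2)) ?_)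
    exact funext fun i => phase_ofReal_mul_coe (levelRadius_pos s _ i) _
  continuous_toFun := by
    have hphase (i : ι) : Continuous fun z : normSqLevelSet Γ s => phase (z.1 i) :=
      continuousOn_phase.comp_continuous ((continuous_apply i).comp continuous_subtype_val)
        fun z => ne_zero_of_mem_normSqLevelSet hΓ z.2 i
    fun_prop
  continuous_invFun := by
    have hradius := continuous_levelRadius s
    fun_prop

end LevelSet

section PrescribedProduct

variable {ι : Type*} [Fintype ι] [DecidableEq ι]

theorem prod_eq_mul_prod_subtype_ne {M : Type*} [CommMonoid M] (i₀ : ι) (u : ι → M) :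
    ∏ i, u i = u i₀ * ∏ j : {j // j ≠ i₀}, u j := by
  rw [Fintype.prod_eq_mul_prod_compl i₀, Finset.prod_subtype {i₀}ᶜ fun j => by
    rw [Finset.mem_compl, Finset.mem_singleton]]

/-- A tuple in a commutative group with prescribed product, the prescription varying continuously
with a parameter `x`, amounts to the parameter together with all entries except the `i₀`-th. -/
def prodEqHomeomorph {X G : Type*} [TopologicalSpace X] [CommGroup G] [TopologicalSpace G]
    [IsTopologicalGroup G] {φ : X → G} (hφ : Continuous φ) (i₀ : ι) :
    {p : X × (ι → G) | ∏ i, p.2 i = φ p.1} ≃ₜ X × ({j // j ≠ i₀} → G) where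
  toFun p := (p.1.1, (Homeomorph.funSplitAt G i₀ p.1.2).2)
  invFun q := ⟨(q.1, (Homeomorph.funSplitAt G i₀).symm (φ q.1 / ∏ j, q.2 j, q.2)), by
    have hne (j : {j // j ≠ i₀}) : ¬(j : ι) = i₀ := j.2
    simp [prod_eq_mul_prod_subtype_ne i₀, hne]⟩
  left_inv p := by
    refine Subtype.ext (Prod.ext rfl ((Homeomorph.funSplitAt G i₀).symm_apply_eq.2 ?_))
    refine Prod.ext (div_eq_of_eq_mul' ?_) rfl
    rw [← p.2, prod_eq_mul_prod_subtype_ne i₀, mul_comm]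
    rfl
  right_inv q := by simp only [Homeomorph.apply_symm_apply]
  continuous_toFun := by fun_prop
  continuous_invFun := by fun_prop

end PrescribedProduct

theorem stmt_10_general (k : ℕ) (c : Fin k → ℝ) (Γ : Set ℂ) (hΓ : (0 : ℂ) ∉ Γ) :
    Nonempty (loopTorus k Γ c ≃ₜ Γ × ({j : Fin (k + 1) // j ≠ 0} → Circle)) := by
  have hphase : Continuous fun a : Γ => phase a :=
    continuousOn_phase.comp_continuous continuous_subtype_val
      fun a => ne_of_mem_of_not_mem a.2 hΓ
  rw [loopTorus_eq_normSqLevelSet]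
  exact ⟨(normSqLevelSetPolarHomeomorph _ hΓ).trans (prodEqHomeomorph hphase 0)⟩

/-- topological part of Proposition 1.1: if `Γ ⊆ ℂ` is the image of a
topological embedding of the circle avoiding the origin, then for any `c : Fin k → ℝ`
the set `S_{Γ,c}`, with the subspace topology, is homeomorphic to the `(k+1)`-dimensional
torus `Fin (k+1) → Circle`. -/
theorem stmt_10 (k : ℕ) (hk : 1 ≤ k) (c : Fin k → ℝ) (Γ : Set ℂ)
    (hemb : ∃ e : Circle → ℂ, Topology.IsEmbedding e ∧ Set.range e = Γ)
    (hΓ : (0 : ℂ) ∉ Γ) :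
    Nonempty (↥(loopTorus k Γ c) ≃ₜ (Fin (k + 1) → Circle)) := by
  obtain ⟨e, he, rfl⟩ := hemb
  exact (stmt_10_general k c _ hΓ).map fun Φ =>
    (Φ.trans (he.toHomeomorph.symm.prodCongr (.refl _))).trans
      (Homeomorph.funSplitAt Circle 0).symm
end
end

section
/- Fix a natural number k ≥ 1. Let X_f : ℂ → ℂ be any map and define Y : ℂ^{k+1} → ℂ^{k+1} by (Y(z)) j = conj(Π_{m ≠ j} z m) · X_f(ψ(z)). Then for every z ∈ ℂ^{k+1} and every v ∈ ℂ^{k+1} lying in the kernel of the real Fréchet derivative of ψ at z, one has ω(Y(z), v) = 0. That is, the lifted Hamiltonian vector field Y(z) is symplectically orthogonal to the tangent space of the fiber of ψ through z — it is a horizontal vector field for the symplectic connection determined by ψ. -/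
noncomputable section

/-- The standard symplectic form on `ℂ^n`: `ω(v, w) = Σ_m Im(conj (v m) * w m)`. -/
def omegaStd {n : ℕ} (v w : Fin n → ℂ) : ℝ :=
  ∑ m, ((starRingEnd ℂ) (v m) * w m).im

/-- The fibration `ψ(z) = z_1 ⋯ z_{k+1}`. -/
def psiFib {k : ℕ} (z : Fin (k + 1) → ℂ) : ℂ := ∏ m, z m

/-- The lift of a vector field `X_f` on the base `ℂ`:
`(Y z) j = conj(Π_{m ≠ j} z m) · X_f(ψ z)`. -/
def liftedField {k : ℕ} (Xf : ℂ → ℂ) (z : Fin (k + 1) → ℂ) : Fin (k + 1) → ℂ :=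
  fun j => (starRingEnd ℂ) (∏ m ∈ Finset.univ.erase j, z m) * Xf (psiFib z)

/-- `ω` is the imaginary part of the standard Hermitian form, for which the complex-linear form with
coefficients `a` is the pairing with `conj a`. -/
theorem omegaStd_conj_mul_const {n : ℕ} (a v : Fin n → ℂ) (c : ℂ) :
    omegaStd (fun j => (starRingEnd ℂ) (a j) * c) v =
      ((starRingEnd ℂ) c * ∑ j, a j * v j).im := by
  simp only [omegaStd, map_mul, Complex.conj_conj, Finset.mul_sum, Complex.im_sum]
  exact Finset.sum_congr rfl fun j _ => by rw [mul_left_comm, mul_assoc]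

theorem fderiv_finsetProd_apply {𝕜 𝔸 ι : Type*} [NontriviallyNormedField 𝕜] [NormedCommRing 𝔸]
    [NormedAlgebra 𝕜 𝔸] [Finite ι] [DecidableEq ι] (s : Finset ι) (z v : ι → 𝔸) :
    fderiv 𝕜 (fun w : ι → 𝔸 => ∏ i ∈ s, w i) z v = ∑ i ∈ s, (∏ j ∈ s.erase i, z j) * v i := by
  simp [hasFDerivAt_finsetProd.fderiv]

theorem fderiv_psiFib_apply {k : ℕ} (z v : Fin (k + 1) → ℂ) :
    fderiv ℝ psiFib z v = ∑ j, (∏ m ∈ Finset.univ.erase j, z m) * v j :=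
  fderiv_finsetProd_apply Finset.univ z v

theorem omegaStd_liftedField {k : ℕ} (Xf : ℂ → ℂ) (z v : Fin (k + 1) → ℂ) :
    omegaStd (liftedField Xf z) v =
      ((starRingEnd ℂ) (Xf (psiFib z)) * fderiv ℝ psiFib z v).im := by
  rw [fderiv_psiFib_apply]
  exact omegaStd_conj_mul_const (fun j => ∏ m ∈ Finset.univ.erase j, z m) v (Xf (psiFib z))

/-- the lifted field `Y(z)` is symplectically orthogonal to the kernel of
`dψ_z`, i.e. to the tangent space of the fiber of `ψ` through `z`: it is horizontal for
the symplectic connection determined by `ψ`. -/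
theorem stmt_15 (k : ℕ) (hk : 1 ≤ k) (Xf : ℂ → ℂ) (z v : Fin (k + 1) → ℂ)
    (hv : fderiv ℝ psiFib z v = 0) :
    omegaStd (liftedField Xf z) v = 0 := by
  rw [omegaStd_liftedField, hv, mul_zero, Complex.zero_im]
end
end
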